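/- Let X be a measurable space, F a family of probability measures on X, α ∈ (0,1), β ∈ (0, 1/e], C > 1, and L, m, k positive integers. If there exists a (C, α)-accurate (m, 1−β, L)-stable list decoder for F, then there exists a (C, 5α)-accurate (m₁, 1−2kβ, L₁)-stable list decoder for the class kmix_k(F) of k-mixtures of F, where m₁ = ⌈(2mk + 8k·log(1/β))/α⌉ and L₁ = (L·k/α)^k · (10·e·k·log(1/β)/α)^{mk}. -/

import Mathlib

open MeasureTheory ProbabilityTheory Matrix

/-- Total variation distance between two measures. -/
noncomputable def tvDist {X : Type*} [MeasurableSpace X] (μ ν : Measure X) : ℝ :=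
  ⨆ E : {E : Set X // MeasurableSet E}, |(μ E.1).toReal - (ν E.1).toReal|

/-- Total variation distance from a measure to a family of measures. -/
noncomputable def tvDistSet {X : Type*} [MeasurableSpace X] (g : Measure X)
    (F : Set (Measure X)) : ℝ :=
  ⨅ f : F, tvDist g f.1

/-- A `(C, α)`-accurate `(m, ρ, L)`-stable list decoder for `F`. -/
def IsStableListDecoder {X : Type*} [MeasurableSpace X] (F : Set (Measure X))
    (C α : ℝ) (m : ℕ) (ρ : ℝ) (L : ℝ)
    (A : (Fin m → X) → Set (Measure X)) : Prop :=
  (∀ S, (A S).Finite ∧ ((A S).ncard : ℝ) ≤ L ∧ ∀ μ ∈ A S, IsProbabilityMeasure μ) ∧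
  (∀ g : Measure X, IsProbabilityMeasure g →
    ∃ gt : Measure X, IsProbabilityMeasure gt ∧
      MeasurableSet {S : Fin m → X | gt ∈ A S} ∧
      ENNReal.ofReal ρ ≤ Measure.pi (fun _ : Fin m => g) {S | gt ∈ A S} ∧
      tvDist gt g ≤ α + C * tvDistSet g F)

instance {X : Type*} [MeasurableSpace X] : MeasurableSpace (ProbabilityMeasure X) :=
  inferInstanceAs (MeasurableSpace {μ : Measure X // IsProbabilityMeasure μ})

/-- `(ε, δ)`-differential privacy of a kernel on datasets of size `n`. -/
def IsDPKernel {X Y : Type*} [MeasurableSpace X] [MeasurableSpace Y] {n : ℕ}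
    (M : Kernel (Fin n → X) Y) (ε δ : ℝ) : Prop :=
  ∀ D D' : Fin n → X, (∃ i, D i ≠ D' i ∧ ∀ j, j ≠ i → D j = D' j) →
    ∀ E : Set Y, MeasurableSet E →
      M D E ≤ ENNReal.ofReal (Real.exp ε) * M D' E + ENNReal.ofReal δ

/-- `F` is `(ε,δ)`-privately `C`-agnostic `(n,α,β)`-learnable. -/
def PrivAgnosticLearnable {X : Type*} [MeasurableSpace X] (F : Set (Measure X))
    (ε δ C : ℝ) (n : ℕ) (α β : ℝ) : Prop :=
  ∃ M : Kernel (Fin n → X) (ProbabilityMeasure X), IsMarkovKernel M ∧ IsDPKernel M ε δ ∧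
    ∀ g : Measure X, IsProbabilityMeasure g →
      ENNReal.ofReal (1 - β) ≤
        ∫⁻ S, M S {f : ProbabilityMeasure X | tvDist (f : Measure X) g ≤ C * tvDistSet g F + α}
          ∂(Measure.pi fun _ : Fin n => g)

/-- The class of `k`-mixtures of `F`. -/
noncomputable def kmix {X : Type*} [MeasurableSpace X] (k : ℕ) (F : Set (Measure X)) :
    Set (Measure X) :=
  {ν | ∃ (w : Fin k → ℝ) (f : Fin k → Measure X),
    (∀ i, 0 ≤ w i) ∧ (∑ i, w i = 1) ∧ (∀ i, f i ∈ F) ∧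
    ν = ∑ i, ENNReal.ofReal (w i) • f i}

/-- Density of the `d`-dimensional Gaussian with mean `μ` and covariance `S`. -/
noncomputable def gaussianPdf (d : ℕ) (μ : Fin d → ℝ) (S : Matrix (Fin d) (Fin d) ℝ)
    (x : Fin d → ℝ) : ℝ :=
  (Real.sqrt ((2 * Real.pi) ^ d * S.det))⁻¹ *
    Real.exp (-(1 / 2) * ((x - μ) ⬝ᵥ (S⁻¹ *ᵥ (x - μ))))

/-- The family of `d`-dimensional Gaussian measures. -/
noncomputable def Gd (d : ℕ) : Set (Measure (Fin d → ℝ)) :=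
  {ν | ∃ (μ : Fin d → ℝ) (S : Matrix (Fin d) (Fin d) ℝ), S.PosDef ∧
    ν = volume.withDensity fun x => ENNReal.ofReal (gaussianPdf d μ S x)}

/-!
Let `∑ i, w i • f i` be a `k`-mixture almost as close to `g` as possible. The mass that `g` shares
with this mixture splits among the components, so `g` is itself a mixture `∑ i, w i • G i` with the
same weights, and on average `G i` is as close to `F` as `g` is to the `k`-mixtures. If
`α / k ≤ w i`, then a sample of `g` of size `n` contains so many points of `G i` that, with
probability at least `1 - 2 * β`, one of its subsamples of size `m` makes the decoder list its
measure for `G i`. The lighter components have total weight at most `α` and may be replaced by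
heavier ones. The new decoder lists all mixtures of measures listed on subsamples, with weights
from a grid of `⌊k / α⌋ ^ k` cells.

A measure may be a mixture of the listed measures in uncountably many ways, so the event that it is
listed need not be measurable. The mixtures are therefore perturbed slightly, in such a way that
each one determines its components; the event then becomes a finite intersection of measurable
events. Such a perturbation exists because a sequence of `k` probability measures can be encoded
in a single one.
-/

open scoped ENNReal NNReal

section TotalVariation

variable {X : Type*} [MeasurableSpace X]

section Measure

variable {κ μ ν : Measure X}

lemma abs_real_sub_real_le_tvDist [IsFiniteMeasure μ] [IsFiniteMeasure ν] {E : Set X}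
    (hE : MeasurableSet E) : |μ.real E - ν.real E| ≤ tvDist μ ν := by
  refine le_ciSup (f := fun E : {E : Set X // MeasurableSet E} => |μ.real E.1 - ν.real E.1|)
    ⟨μ.real .univ + ν.real .univ, ?_⟩ ⟨E, hE⟩
  rintro _ ⟨E, rfl⟩
  calc |μ.real E.1 - ν.real E.1| ≤ |μ.real E.1| + |ν.real E.1| := abs_sub _ _
    _ = μ.real E.1 + ν.real E.1 := by simp only [abs_of_nonneg measureReal_nonneg]
    _ ≤ μ.real .univ + ν.real .univ :=
      add_le_add (measureReal_mono E.1.subset_univ) (measureReal_mono E.1.subset_univ)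

lemma tvDist_le {b : ℝ} (h : ∀ E, MeasurableSet E → |μ.real E - ν.real E| ≤ b) :
    tvDist μ ν ≤ b :=
  have : Nonempty {E : Set X // MeasurableSet E} := ⟨∅, .empty⟩
  ciSup_le fun E => h E.1 E.2

lemma tvDist_nonneg : 0 ≤ tvDist μ ν := Real.iSup_nonneg fun _ => abs_nonneg _

lemma tvDist_self (μ : Measure X) : tvDist μ μ = 0 := by simp [tvDist]

lemma tvDist_comm (μ ν : Measure X) : tvDist μ ν = tvDist ν μ := by
  simp only [tvDist, abs_sub_comm]

lemma tvDist_triangle (κ μ ν : Measure X) [IsFiniteMeasure κ] [IsFiniteMeasure μ]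
    [IsFiniteMeasure ν] : tvDist κ ν ≤ tvDist κ μ + tvDist μ ν :=
  tvDist_le fun E hE => (abs_sub_le _ (μ.real E) _).trans
    (add_le_add (abs_real_sub_real_le_tvDist hE) (abs_real_sub_real_le_tvDist hE))

lemma tvDist_le_one [IsProbabilityMeasure μ] [IsProbabilityMeasure ν] : tvDist μ ν ≤ 1 :=
  tvDist_le fun _ _ => abs_sub_le_of_nonneg_of_le measureReal_nonneg measureReal_le_one
    measureReal_nonneg measureReal_le_one

lemma tvDistSet_nonneg {F : Set (Measure X)} : 0 ≤ tvDistSet μ F :=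
  Real.iInf_nonneg fun _ => tvDist_nonneg

lemma tvDistSet_le {F : Set (Measure X)} (hν : ν ∈ F) : tvDistSet μ F ≤ tvDist μ ν :=
  ciInf_le (f := fun f : F => tvDist μ f.1)
    ⟨0, Set.forall_mem_range.2 fun _ => tvDist_nonneg⟩ ⟨ν, hν⟩

end Measure

/-- Probability measures under the total variation distance. This is not an instance because
`ProbabilityMeasure X` carries the topology of weak convergence. -/
noncomputable abbrev tvPseudoMetricSpace (X : Type*) [MeasurableSpace X] :
    PseudoMetricSpace (ProbabilityMeasure X) where
  dist μ ν := tvDist (μ : Measure X) ν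
  dist_self μ := tvDist_self _
  dist_comm μ ν := tvDist_comm _ _
  dist_triangle κ μ ν := tvDist_triangle _ _ _

end TotalVariation

section Mixture

variable {X : Type*} [MeasurableSpace X] {ι : Type*} [Fintype ι]

lemma sum_ofReal_stdSimplex (w : stdSimplex ℝ ι) : ∑ i, ENNReal.ofReal (w i) = 1 := by
  rw [← ENNReal.ofReal_sum_of_nonneg fun i _ => stdSimplex.zero_le w i, stdSimplex.sum_eq_one,
    ENNReal.ofReal_one]

/-- The mixture of the measures `f i` with weights `w i`. -/
noncomputable def mixture (w : stdSimplex ℝ ι) (f : ι → ProbabilityMeasure X) :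
    ProbabilityMeasure X :=
  ⟨∑ i, ENNReal.ofReal (w i) • (f i : Measure X), ⟨by simp [sum_ofReal_stdSimplex]⟩⟩

lemma real_sum_ofReal_smul_apply (w : stdSimplex ℝ ι) (μ : ι → Measure X)
    [∀ i, IsFiniteMeasure (μ i)] (E : Set X) :
    (∑ i, ENNReal.ofReal (w i) • μ i).real E = ∑ i, w i * (μ i).real E := by
  rw [Measure.real, Measure.finsetSum_apply, ENNReal.toReal_sum fun i _ => by
    simpa using ENNReal.mul_ne_top ENNReal.ofReal_ne_top (measure_ne_top _ _)]
  simp [Measure.real, stdSimplex.zero_le]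

lemma mixture_real_apply (w : stdSimplex ℝ ι) (f : ι → ProbabilityMeasure X) (E : Set X) :
    (mixture w f : Measure X).real E = ∑ i, w i * (f i : Measure X).real E :=
  real_sum_ofReal_smul_apply w (fun i => (f i : Measure X)) E

lemma ofReal_smul_le_mixture (w : stdSimplex ℝ ι) (f : ι → ProbabilityMeasure X) (i : ι) :
    ENNReal.ofReal (w i) • (f i : Measure X) ≤ mixture w f :=
  Finset.single_le_sum (f := fun i => ENNReal.ofReal (w i) • (f i : Measure X))
    (fun _ _ => Measure.zero_le _) (Finset.mem_univ i)

lemma mixture_const (w : stdSimplex ℝ ι) (μ : ProbabilityMeasure X) :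
    mixture w (fun _ => μ) = μ :=
  Subtype.ext <| by
    change ∑ i, ENNReal.ofReal (w i) • (μ : Measure X) = μ
    rw [← Finset.sum_smul, sum_ofReal_stdSimplex, one_smul]

lemma mixture_mem_kmix {k : ℕ} {F : Set (Measure X)} (w : stdSimplex ℝ (Fin k))
    {f : Fin k → ProbabilityMeasure X} (hf : ∀ i, (f i : Measure X) ∈ F) :
    (mixture w f : Measure X) ∈ kmix k F :=
  ⟨w, fun i => f i, stdSimplex.zero_le w, stdSimplex.sum_eq_one w, hf, rfl⟩

lemma exists_eq_mixture_of_mem_kmix {k : ℕ} {F : Set (Measure X)}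
    (hF : ∀ f ∈ F, IsProbabilityMeasure f) {μ : Measure X} (hμ : μ ∈ kmix k F) :
    ∃ (w : stdSimplex ℝ (Fin k)) (f : Fin k → ProbabilityMeasure X),
      (∀ i, (f i : Measure X) ∈ F) ∧ μ = mixture w f := by
  obtain ⟨w, f, hw, hw1, hf, rfl⟩ := hμ
  exact ⟨⟨w, hw, hw1⟩, fun i => ⟨f i, hF _ (hf i)⟩, hf, rfl⟩

lemma tvDist_mixture_weights_le (v w : stdSimplex ℝ ι) (f : ι → ProbabilityMeasure X) :
    tvDist (mixture v f : Measure X) (mixture w f) ≤ ∑ i, |v i - w i| := by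
  refine tvDist_le fun E _ => ?_
  simp only [mixture_real_apply, ← Finset.sum_sub_distrib, ← sub_mul]
  refine (Finset.abs_sum_le_sum_abs _ _).trans (Finset.sum_le_sum fun i _ => ?_)
  rw [abs_mul, abs_of_nonneg measureReal_nonneg]
  exact mul_le_of_le_one_right (abs_nonneg _) measureReal_le_one

lemma tvDist_mixture_weights_le_of_abs_sub_le {v w : stdSimplex ℝ ι} {η : ℝ}
    (hvw : ∀ i, |v i - w i| ≤ η) (f : ι → ProbabilityMeasure X) :
    tvDist (mixture v f : Measure X) (mixture w f) ≤ Fintype.card ι * η :=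
  (tvDist_mixture_weights_le v w f).trans <| by
    simpa using Finset.sum_le_card_nsmul Finset.univ _ _ fun i _ => hvw i

lemma tvDist_mixture_components_le (w : stdSimplex ℝ ι) (f g : ι → ProbabilityMeasure X) :
    tvDist (mixture w f : Measure X) (mixture w g) ≤
      ∑ i, w i * tvDist (f i : Measure X) (g i) := by
  refine tvDist_le fun E hE => ?_
  simp only [mixture_real_apply, ← Finset.sum_sub_distrib, ← mul_sub]
  refine (Finset.abs_sum_le_sum_abs _ _).trans (Finset.sum_le_sum fun i _ => ?_)
  rw [abs_mul, abs_of_nonneg (stdSimplex.zero_le w i)]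
  exact mul_le_mul_of_nonneg_left (abs_real_sub_real_le_tvDist hE) (stdSimplex.zero_le w i)

end Mixture

section Decomposition

variable {X : Type*} [MeasurableSpace X] {κ μ ν : Measure X}

lemma exists_le_le_real_univ_sub_le_tvDist (μ ν : Measure X) [IsFiniteMeasure μ]
    [IsFiniteMeasure ν] :
    ∃ κ, κ ≤ μ ∧ κ ≤ ν ∧ μ.real .univ - κ.real .univ ≤ tvDist μ ν := by
  obtain ⟨s, hs⟩ := exists_isHahnDecomposition μ ν
  refine ⟨μ.restrict s + ν.restrict sᶜ, ?_, ?_, ?_⟩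
  · calc μ.restrict s + ν.restrict sᶜ ≤ μ.restrict s + μ.restrict sᶜ :=
          add_le_add_right hs.ge_on_compl _
      _ = μ := Measure.restrict_add_restrict_compl hs.measurableSet
  · calc μ.restrict s + ν.restrict sᶜ ≤ ν.restrict s + ν.restrict sᶜ :=
          add_le_add_left hs.le_on _
      _ = ν := Measure.restrict_add_restrict_compl hs.measurableSet
  · have hmass := measureReal_add_measureReal_compl (μ := μ) hs.measurableSet
    calc μ.real .univ - (μ.restrict s + ν.restrict sᶜ).real .univ = μ.real sᶜ - ν.real sᶜ := by
          rw [measureReal_add_apply]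
          simp only [measureReal_restrict_apply, MeasurableSet.univ, Set.univ_inter]
          linarith
      _ ≤ tvDist μ ν :=
          (le_abs_self _).trans (abs_real_sub_real_le_tvDist hs.measurableSet.compl)

lemma tvDist_le_one_sub_of_le [IsProbabilityMeasure μ] [IsProbabilityMeasure ν]
    (hμ : κ ≤ μ) (hν : κ ≤ ν) : tvDist μ ν ≤ 1 - κ.real .univ := by
  have := isFiniteMeasure_of_le μ hμ
  have le_real {ξ : Measure X} [IsProbabilityMeasure ξ] (h : κ ≤ ξ) (E : Set X) :
      κ.real E ≤ ξ.real E := ENNReal.toReal_mono (measure_ne_top _ _) (h E)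
  refine tvDist_le fun E hE => abs_sub_le_iff.2 ?_
  constructor <;>
    linarith [le_real hμ E, le_real hν E, le_real hμ Eᶜ, le_real hν Eᶜ,
      measureReal_add_measureReal_compl (μ := κ) hE, probReal_add_probReal_compl (μ := μ) hE,
      probReal_add_probReal_compl (μ := ν) hE]

lemma exists_le_eq_sum_smul_of_le_sum_smul {ι : Type*} [Fintype ι] {p : ι → ℝ≥0∞}
    {μ : ι → Measure X} [IsFiniteMeasure (∑ i, p i • μ i)] (hκ : κ ≤ ∑ i, p i • μ i) :
    ∃ κ' : ι → Measure X, (∀ i, κ' i ≤ μ i) ∧ κ = ∑ i, p i • κ' i := by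
  have := isFiniteMeasure_of_le _ hκ
  let ν := ∑ i, p i • μ i
  refine ⟨fun i => (μ i).withDensity (κ.rnDeriv ν ⊓ 1), fun i => ?_, ?_⟩
  · exact (withDensity_mono (ae_of_all _ fun _ => inf_le_right)).trans_eq withDensity_one
  · calc κ = ν.withDensity (κ.rnDeriv ν) :=
          (Measure.withDensity_rnDeriv_eq _ _ (Measure.absolutelyContinuous_of_le hκ)).symm
      _ = ν.withDensity (κ.rnDeriv ν ⊓ 1) := withDensity_congr_ae <|
          (Measure.rnDeriv_le_one_of_le hκ).mono fun _ h => (inf_eq_left.2 h).symm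
      _ = ∑ i, p i • (μ i).withDensity (κ.rnDeriv ν ⊓ 1) := by
          simp only [ν, ← Measure.sum_fintype, withDensity_sum, withDensity_smul_measure]

lemma exists_eq_smul_probabilityMeasure [Nonempty X] (μ : Measure X) [IsFiniteMeasure μ] :
    ∃ ν : ProbabilityMeasure X, μ = μ .univ • (ν : Measure X) := by
  let μ' : FiniteMeasure X := ⟨μ, inferInstance⟩
  refine ⟨μ'.normalize, ?_⟩
  conv_lhs => rw [show μ = μ' from rfl, μ'.self_eq_mass_smul_normalize]
  rw [FiniteMeasure.toMeasure_smul]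
  change (μ'.mass : ℝ≥0∞) • (μ'.normalize : Measure X) = _
  rw [FiniteMeasure.ennreal_mass]
  rfl

lemma exists_eq_mixture_sum_tvDist_le {ι : Type*} [Fintype ι] (g : ProbabilityMeasure X)
    (w : stdSimplex ℝ ι) (f : ι → ProbabilityMeasure X) :
    ∃ G : ι → ProbabilityMeasure X, g = mixture w G ∧
      ∑ i, w i * tvDist (G i : Measure X) (f i) ≤ tvDist (g : Measure X) (mixture w f) := by
  have : Nonempty X := ProbabilityMeasure.nonempty g
  obtain ⟨κ, hκg, hκf, hκ⟩ := exists_le_le_real_univ_sub_le_tvDist (g : Measure X) (mixture w f)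
  have := isFiniteMeasure_of_le (g : Measure X) hκg
  have : IsFiniteMeasure (∑ i, ENNReal.ofReal (w i) • (f i : Measure X)) :=
    inferInstanceAs (IsFiniteMeasure (mixture w f : Measure X))
  obtain ⟨κ', hκ'f, hκ'⟩ := exists_le_eq_sum_smul_of_le_sum_smul hκf
  have (i : ι) : IsFiniteMeasure (κ' i) := isFiniteMeasure_of_le _ (hκ'f i)
  have hκ'_le_one (i : ι) : κ' i .univ ≤ 1 := (hκ'f i .univ).trans prob_le_one
  obtain ⟨d, hd⟩ := exists_eq_smul_probabilityMeasure (g - κ : Measure X)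
  have residual_mass : (g - κ : Measure X) .univ =
      ∑ i, ENNReal.ofReal (w i) * (1 - κ' i .univ) := by
    rw [Measure.sub_apply .univ hκg, measure_univ]
    refine (ENNReal.eq_sub_of_add_eq (measure_ne_top _ _) ?_).symm
    rw [hκ', Measure.finsetSum_apply, ← Finset.sum_add_distrib]
    simp [← mul_add, tsub_add_cancel_of_le (hκ'_le_one _), sum_ofReal_stdSimplex]
  let G (i : ι) : ProbabilityMeasure X := ⟨κ' i + (1 - κ' i .univ) • (d : Measure X),
    ⟨by simp [add_tsub_cancel_of_le (hκ'_le_one i)]⟩⟩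
  refine ⟨G, Subtype.ext ?_, ?_⟩
  · change (g : Measure X) = ∑ i, ENNReal.ofReal (w i) • (κ' i + (1 - κ' i .univ) • (d : Measure X))
    simp only [smul_add, Finset.sum_add_distrib, smul_smul, ← Finset.sum_smul]
    rw [← hκ', ← residual_mass, ← hd, add_comm, Measure.sub_add_cancel_of_le hκg]
  · have close (i : ι) : tvDist (G i : Measure X) (f i) ≤ 1 - (κ' i).real .univ :=
      tvDist_le_one_sub_of_le (Measure.le_add_right le_rfl) (hκ'f i)
    calc ∑ i, w i * tvDist (G i : Measure X) (f i) ≤ ∑ i, w i * (1 - (κ' i).real .univ) :=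
          Finset.sum_le_sum fun i _ => mul_le_mul_of_nonneg_left (close i) (stdSimplex.zero_le w i)
      _ = 1 - κ.real .univ := by
          rw [hκ', real_sum_ofReal_smul_apply]
          simp only [mul_sub, mul_one, Finset.sum_sub_distrib, stdSimplex.sum_eq_one]
      _ ≤ tvDist (g : Measure X) (mixture w f) := by rwa [probReal_univ] at hκ

lemma exists_eq_mixture_sum_tvDistSet_le {F : Set (Measure X)}
    (hF : ∀ f ∈ F, IsProbabilityMeasure f) {k : ℕ} (hk : 0 < k) (g : ProbabilityMeasure X)
    {ε : ℝ} (hε : 0 < ε) :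
    ∃ (w : stdSimplex ℝ (Fin k)) (G : Fin k → ProbabilityMeasure X), g = mixture w G ∧
      ∑ i, w i * tvDistSet (G i : Measure X) F ≤ tvDistSet (g : Measure X) (kmix k F) + ε := by
  have : NeZero k := ⟨hk.ne'⟩
  rcases F.eq_empty_or_nonempty with rfl | ⟨f₀, hf₀⟩
  · -- The distance to the empty family is an infimum over the empty set, hence `0`.
    refine ⟨stdSimplex.barycenter, fun _ => g, (mixture_const _ g).symm, ?_⟩
    have dist_empty : tvDistSet (g : Measure X) ∅ = 0 := Real.iInf_of_isEmpty _
    simpa [dist_empty] using add_nonneg tvDistSet_nonneg hε.le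
  · have : Nonempty (kmix k F) :=
      ⟨_, mixture_mem_kmix stdSimplex.barycenter (f := fun _ => ⟨f₀, hF _ hf₀⟩) fun _ => hf₀⟩
    obtain ⟨⟨_, hμ⟩, hlt⟩ := exists_lt_of_ciInf_lt
      (lt_add_of_pos_right (tvDistSet (g : Measure X) (kmix k F)) hε)
    obtain ⟨w, f, hf, rfl⟩ := exists_eq_mixture_of_mem_kmix hF hμ
    obtain ⟨G, hg, hG⟩ := exists_eq_mixture_sum_tvDist_le g w f
    refine ⟨w, G, hg, le_trans ?_ (hG.trans hlt.le)⟩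
    exact Finset.sum_le_sum fun i _ =>
      mul_le_mul_of_nonneg_left (tvDistSet_le (hf i)) (stdSimplex.zero_le w i)

end Decomposition

section Subsampling

variable {X : Type*} {m n : ℕ}

/-- The samples of size `n` having a subsample in `B`, where a subsample keeps the order of the
sample points. -/
def subsampleHit (n : ℕ) (B : Set (Fin m → X)) : Set (Fin n → X) :=
  {S | ∃ T : Fin m ↪o Fin n, S ∘ T ∈ B}

lemma subsampleHit_eq_univ {B : Set (Fin 0 → X)} (hB : B.Nonempty) :
    subsampleHit n B = .univ :=
  Set.eq_univ_of_forall fun _ => ⟨.ofIsEmpty, by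
    obtain ⟨x, hx⟩ := hB
    rwa [Subsingleton.elim (_ ∘ _) x]⟩

lemma cons_mem_subsampleHit_of_mem_tail {B : Set (Fin (m + 1) → X)} {x : X} {S : Fin n → X}
    (hS : S ∈ subsampleHit n {R : Fin m → X | (Fin.cons x R : Fin (m + 1) → X) ∈ B}) :
    (Fin.cons x S : Fin (n + 1) → X) ∈ subsampleHit (n + 1) B := by
  obtain ⟨T, hT⟩ := hS
  have strictMono_cons : StrictMono (Fin.cons 0 (Fin.succ ∘ T) : Fin (m + 1) → Fin (n + 1)) :=
    Fin.strictMono_cons.2 ⟨fun i => (T i).succ_pos, Fin.strictMono_succ.comp T.strictMono⟩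
  refine ⟨OrderEmbedding.ofStrictMono _ strictMono_cons, ?_⟩
  convert Set.mem_ofPred_eq ▸ hT using 1
  funext i
  cases i using Fin.cases <;> rfl

lemma cons_mem_subsampleHit {B : Set (Fin m → X)} (x : X) {S : Fin n → X}
    (hS : S ∈ subsampleHit n B) : (Fin.cons x S : Fin (n + 1) → X) ∈ subsampleHit (n + 1) B := by
  obtain ⟨T, hT⟩ := hS
  exact ⟨T.trans (Fin.succOrderEmb n), hT⟩

variable [MeasurableSpace X]

lemma measurableSet_subsampleHit {B : Set (Fin m → X)} (hB : MeasurableSet B) :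
    MeasurableSet (subsampleHit n B) := by
  rw [subsampleHit, Set.ofPred_exists]
  exact .iUnion fun T => (measurable_pi_lambda (fun S : Fin n → X => S ∘ T)
    fun i => measurable_pi_apply (T i)) hB

lemma measurable_fin_cons (x : X) :
    Measurable fun S : Fin n → X => (Fin.cons x S : Fin (n + 1) → X) :=
  measurable_pi_lambda _ fun i => by
    cases i using Fin.cases with
    | zero => exact measurable_const
    | succ i => exact measurable_pi_apply i

lemma measure_pi_fin_succ_apply (μ : Measure X) [SigmaFinite μ] {E : Set (Fin (n + 1) → X)}
    (hE : MeasurableSet E) :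
    Measure.pi (fun _ => μ) E =
      ∫⁻ x, Measure.pi (fun _ : Fin n => μ) {S | (Fin.cons x S : Fin (n + 1) → X) ∈ E} ∂μ := by
  have h := (measurePreserving_piFinSuccAbove (fun _ : Fin (n + 1) => μ) 0).symm
  rw [← h.measure_preimage hE.nullMeasurableSet, Measure.prod_apply (h.measurable hE)]
  refine lintegral_congr fun x => congrArg _ (Set.ext fun S => ?_)
  simp [MeasurableEquiv.piFinSuccAbove, Fin.insertNthEquiv]

lemma measure_pi_le_measure_pi_subsampleHit {μ ν : Measure X} [IsProbabilityMeasure μ]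
    [IsProbabilityMeasure ν] {B : Set (Fin 0 → X)} :
    Measure.pi (fun _ => μ) B ≤ Measure.pi (fun _ => ν) (subsampleHit n B) := by
  obtain rfl | hB := B.eq_empty_or_nonempty
  · simp
  · rw [subsampleHit_eq_univ hB, measure_univ]
    exact prob_le_one

lemma lintegral_le_lintegral_add {μ : Measure X} {f g : X → ℝ≥0∞} {c : ℝ≥0∞}
    (h : ∀ x, f x ≤ g x + c) : ∫⁻ x, f x ∂μ ≤ ∫⁻ x, g x ∂μ + μ .univ * c :=
  (lintegral_mono h).trans_eq <| by
    rw [lintegral_add_right _ measurable_const, lintegral_const, mul_comm]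

lemma add_two_mul_one_sub {p : ℝ≥0∞} (hp : p ≤ 1) : p + 2 * (1 - p) = 2 * (1 - p / 2) := by
  have hp_top : p ≠ ∞ := ne_top_of_le_ne_top ENNReal.one_ne_top hp
  calc p + 2 * (1 - p) = 1 + (1 - p) := by rw [two_mul, ← add_assoc, add_tsub_cancel_of_le hp]
    _ = 2 * (1 - p / 2) := by
      rw [← (ENNReal.cancel_of_ne hp_top).add_tsub_assoc_of_le hp, one_add_one_eq_two,
        ENNReal.mul_sub fun _ _ => ENNReal.ofNat_ne_top, mul_one,
        ENNReal.mul_div_cancel two_ne_zero ENNReal.ofNat_ne_top]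

/-- The error term is Markov's inequality for `2 ^ (m - N)`, where `N` is the number of sample
points drawn from the component `μ` of `ν`. -/
lemma measure_pi_le_measure_pi_subsampleHit_add {μ ν : Measure X} [IsProbabilityMeasure μ]
    [IsProbabilityMeasure ν] {p : ℝ≥0∞} (hν : p • μ ≤ ν) {B : Set (Fin m → X)}
    (hB : MeasurableSet B) :
    Measure.pi (fun _ => μ) B ≤
      Measure.pi (fun _ => ν) (subsampleHit n B) + 2 ^ m * (1 - p / 2) ^ n := by
  have hp : p ≤ 1 := by simpa using hν .univ
  induction n generalizing m with
  | zero =>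
    refine le_add_left (prob_le_one.trans ?_)
    simpa using one_le_pow₀ (M₀ := ℝ≥0∞) one_le_two
  | succ n ih =>
    cases m with
    | zero => exact le_add_right measure_pi_le_measure_pi_subsampleHit
    | succ m =>
      have : IsFiniteMeasure (p • μ) := isFiniteMeasure_of_le ν hν
      let r := ν - p • μ
      have hr : r + p • μ = ν := Measure.sub_add_cancel_of_le hν
      have hr_mass : r .univ = 1 - p := by simp [r, Measure.sub_apply .univ hν]
      let q := 1 - p / 2
      let hit (x : X) := Measure.pi (fun _ => ν)
        {S : Fin n → X | (Fin.cons x S : Fin (n + 1) → X) ∈ subsampleHit (n + 1) B}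
      have first_hit : p * Measure.pi (fun _ => μ) B ≤
          ∫⁻ x, hit x ∂(p • μ) + p * (2 ^ m * q ^ n) := by
        rw [measure_pi_fin_succ_apply μ hB, ← smul_eq_mul p (∫⁻ _, _ ∂μ), ← lintegral_smul_measure]
        refine (lintegral_le_lintegral_add (g := hit) fun x =>
          (ih (measurable_fin_cons x hB)).trans (add_le_add_left
            (measure_mono fun S => cons_mem_subsampleHit_of_mem_tail) _)).trans_eq ?_
        rw [Measure.smul_apply, measure_univ, smul_eq_mul, mul_one]
      have first_missed : (1 - p) * Measure.pi (fun _ => μ) B ≤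
          ∫⁻ x, hit x ∂r + (1 - p) * (2 ^ (m + 1) * q ^ n) := by
        rw [← hr_mass, mul_comm, ← lintegral_const]
        exact lintegral_le_lintegral_add fun x => (ih hB).trans
          (add_le_add_left (measure_mono fun S => cons_mem_subsampleHit x) _)
      calc Measure.pi (fun _ => μ) B
          = (1 - p) * Measure.pi (fun _ => μ) B + p * Measure.pi (fun _ => μ) B := by
            rw [← add_mul, tsub_add_cancel_of_le hp, one_mul]
        _ ≤ (∫⁻ x, hit x ∂r + (1 - p) * (2 ^ (m + 1) * q ^ n)) +
              (∫⁻ x, hit x ∂(p • μ) + p * (2 ^ m * q ^ n)) := add_le_add first_missed first_hit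
        _ = ∫⁻ x, hit x ∂(r + p • μ) + 2 ^ m * q ^ n * (p + 2 * (1 - p)) := by
            rw [lintegral_add_measure]; ring
        _ = _ := by
            rw [hr, add_two_mul_one_sub hp,
              measure_pi_fin_succ_apply ν (measurableSet_subsampleHit hB)]
            ring

lemma two_pow_mul_one_sub_half_pow_le {p β : ℝ} (hp : p ≤ 1) (hβ : 0 < β)
    (hn : 2 * (m + Real.log (1 / β)) ≤ n * p) : 2 ^ m * (1 - p / 2) ^ n ≤ β := by
  have h_two : (2 : ℝ) ≤ Real.exp 1 := by linarith [Real.add_one_le_exp (1 : ℝ)]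
  calc 2 ^ m * (1 - p / 2) ^ n ≤ Real.exp 1 ^ m * Real.exp (-(p / 2)) ^ n := by
        gcongr
        · exact pow_nonneg (by linarith) n
        · linarith
        · linarith [Real.add_one_le_exp (-(p / 2))]
    _ = Real.exp (m - n * p / 2) := by
        rw [← Real.exp_nat_mul, ← Real.exp_nat_mul, ← Real.exp_add]; ring_nf
    _ ≤ Real.exp (-Real.log (1 / β)) := by gcongr; linarith
    _ = β := by rw [one_div, Real.log_inv, neg_neg, Real.exp_log hβ]

lemma ofReal_le_measure_pi_subsampleHit {μ ν : Measure X} [IsProbabilityMeasure μ]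
    [IsProbabilityMeasure ν] {p β : ℝ} (hp₀ : 0 ≤ p) (hν : ENNReal.ofReal p • μ ≤ ν) (hβ : 0 < β)
    (hn : 2 * (m + Real.log (1 / β)) ≤ n * p) {B : Set (Fin m → X)} (hB : MeasurableSet B)
    (hμB : ENNReal.ofReal (1 - β) ≤ Measure.pi (fun _ => μ) B) :
    ENNReal.ofReal (1 - 2 * β) ≤ Measure.pi (fun _ => ν) (subsampleHit n B) := by
  have hp : p ≤ 1 := by simpa using hν .univ
  have tail : 2 ^ m * (1 - ENNReal.ofReal p / 2) ^ n ≤ ENNReal.ofReal β := by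
    refine le_trans (le_of_eq ?_)
      (ENNReal.ofReal_le_ofReal (two_pow_mul_one_sub_half_pow_le hp hβ hn))
    rw [ENNReal.ofReal_mul (by positivity), ENNReal.ofReal_pow zero_le_two,
      ENNReal.ofReal_pow (by linarith), ENNReal.ofReal_sub _ (by positivity),
      ENNReal.ofReal_div_of_pos zero_lt_two, ENNReal.ofReal_one, ENNReal.ofReal_ofNat]
  rw [show 1 - 2 * β = 1 - β - β by ring, ENNReal.ofReal_sub _ hβ.le, tsub_le_iff_right]
  exact hμB.trans ((measure_pi_le_measure_pi_subsampleHit_add hν hB).trans (by gcongr))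

end Subsampling

section Counting

lemma card_orderEmb_fin (m n : ℕ) : Nat.card (Fin m ↪o Fin n) = n.choose m := by
  rw [Nat.card_congr Set.powersetCard.ofFinEmbEquiv, Set.powersetCard.card, Nat.card_fin]

lemma choose_le_ten_mul_exp_one_mul_pow {m n : ℕ} {x : ℝ} (hx : 1 ≤ x)
    (hn : n ≤ (2 * m + 9) * x) : (n.choose m : ℝ) ≤ (10 * Real.exp 1 * x) ^ m := by
  match m with
  | 0 => simp
  | 1 =>
    rw [Nat.choose_one_right, pow_one]
    norm_num at hn
    nlinarith [Real.add_one_le_exp (1 : ℝ)]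
  | m + 2 =>
    have hn' : (n : ℝ) ≤ 10 * x * (m + 2 : ℕ) := by
      push_cast at hn ⊢
      nlinarith [(m.cast_nonneg : (0 : ℝ) ≤ m)]
    calc (n.choose (m + 2) : ℝ) ≤ (n : ℝ) ^ (m + 2) / (m + 2).factorial :=
          Nat.choose_le_pow_div _ _
      _ ≤ (10 * x * (m + 2 : ℕ)) ^ (m + 2) / (m + 2).factorial := by gcongr
      _ = (10 * x) ^ (m + 2) * (((m + 2 : ℕ) : ℝ) ^ (m + 2) / (m + 2).factorial) := by
          rw [mul_pow, mul_div_assoc]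
      _ ≤ (10 * x) ^ (m + 2) * Real.exp (m + 2 : ℕ) := by
          gcongr
          exact Real.pow_div_factorial_le_exp _ (Nat.cast_nonneg _) _
      _ = (10 * Real.exp 1 * x) ^ (m + 2) := by
          rw [← Real.exp_one_pow]; ring

end Counting

section Simplex

variable {ι : Type*} [Fintype ι]

lemma exists_fin_cell {M : ℕ} (hM : 0 < M) :
    ∃ cell : ℝ → Fin M, ∀ x ∈ Set.Icc (0 : ℝ) 1, x * M ∈ Set.Icc (cell x : ℝ) (cell x + 1) := by
  refine ⟨fun x => ⟨min ⌊x * M⌋₊ (M - 1), by grind⟩, fun x ⟨hx0, hx1⟩ => ⟨?_, ?_⟩⟩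
  · exact (Nat.cast_le.2 (min_le_left _ _)).trans (Nat.floor_le (by positivity))
  · obtain h | h := min_choice ⌊x * M⌋₊ (M - 1) <;> simp only [h]
    · exact (Nat.lt_floor_add_one _).le
    · rw [Nat.cast_pred hM, sub_add_cancel]
      exact mul_le_of_le_one_left M.cast_nonneg hx1

lemma exists_ncard_le_pow_forall_abs_sub_le {M : ℕ} (hM : 0 < M) :
    ∃ W : Set (stdSimplex ℝ ι), W.Finite ∧ W.ncard ≤ M ^ Fintype.card ι ∧
      ∀ w : stdSimplex ℝ ι, ∃ v ∈ W, ∀ i, |v i - w i| ≤ 1 / M := by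
  obtain ⟨cell, hcell⟩ := exists_fin_cell hM
  obtain ⟨W, -, hW⟩ := Set.exists_subset_bijOn .univ fun (w : stdSimplex ℝ ι) i => cell (w i)
  refine ⟨W, hW.finite_iff_finite.2 (Set.toFinite _), ?_, fun w => ?_⟩
  · rw [← hW.injOn.ncard_image]
    exact (Set.ncard_le_card _).trans_eq <| by
      rw [Nat.card_fun, Nat.card_fin, Nat.card_eq_fintype_card]
  · obtain ⟨v, hv, hvw⟩ := hW.surjOn (Set.mem_image_of_mem _ (Set.mem_univ w))
    refine ⟨v, hv, fun i => ?_⟩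
    have hvi := hcell (v i) ⟨stdSimplex.zero_le v i, stdSimplex.le_one v i⟩
    have hwi := hcell (w i) ⟨stdSimplex.zero_le w i, stdSimplex.le_one w i⟩
    have same_cell : cell (v i) = cell (w i) := congrFun hvw i
    rw [same_cell] at hvi
    have hM' : (0 : ℝ) < M := Nat.cast_pos.2 hM
    rw [abs_sub_le_iff, le_div_iff₀ hM', le_div_iff₀ hM', sub_mul, sub_mul]
    constructor <;> linarith [hvi.1, hvi.2, hwi.1, hwi.2]

lemma exists_le_comp_and_eq_of_le (w : stdSimplex ℝ ι) {τ : ℝ} (hτ : Fintype.card ι * τ ≤ 1) :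
    ∃ σ : ι → ι, (∀ i, τ ≤ w (σ i)) ∧ ∀ i, τ ≤ w i → σ i = i := by
  classical
  have : Nonempty ι := by
    by_contra! h
    simpa using stdSimplex.sum_eq_one w
  obtain ⟨j, -, hj⟩ : ∃ j ∈ Finset.univ, τ ≤ w j :=
    Finset.exists_le_of_sum_le Finset.univ_nonempty (by simpa [stdSimplex.sum_eq_one])
  refine ⟨fun i => if τ ≤ w i then i else j, fun i => ?_, fun i hi => if_pos hi⟩
  dsimp only
  split_ifs with hi
  exacts [hi, hj]

end Simplex

section Perturbation

lemma exists_isSeparated_isCover {P : Type*} [PseudoEMetricSpace P] (ε : ℝ≥0) (s : Set P) :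
    ∃ N ⊆ s, Metric.IsSeparated ε N ∧ Metric.IsCover ε s N := by
  obtain ⟨N, hN⟩ := zorn_subset {N : Set P | N ⊆ s ∧ Metric.IsSeparated ε N}
    fun c hc hchain => ⟨⋃₀ c, ⟨Set.sUnion_subset fun N hN => (hc hN).1,
      (Set.pairwise_sUnion hchain.directedOn).2 fun N hN => (hc hN).2⟩,
      fun _ => Set.subset_sUnion_of_mem⟩
  exact ⟨N, hN.prop.1, hN.prop.2, .of_maximal_isSeparated hN⟩

lemma exists_factorsThrough_dist_le {P Q K : Type*} [PseudoMetricSpace P] {δ : ℝ≥0}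
    {e : P → Q → P} (he : ∀ x, (e x).Injective) (he_dist : ∀ x q, dist (e x q) x ≤ δ)
    (f : K → P) (q : K → Q) :
    ∃ ψ : K → P, q.FactorsThrough ψ ∧ ∀ a, dist (ψ a) (f a) ≤ 3 * δ := by
  -- Distinct points of a `2 * δ`-separated set have disjoint `δ`-balls, so the encoding `e x q`
  -- at a point `x` of the set determines `x`, and hence `q`.
  obtain ⟨N, -, hsep, hcov⟩ := exists_isSeparated_isCover (P := P) (2 * δ) .univ
  choose near hnear hdist using fun x => hcov (Set.mem_univ x)
  have near_dist (x : P) : dist x (near x) ≤ 2 * δ := by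
    exact_mod_cast edist_le_coe.1 (hdist x)
  refine ⟨fun a => e (near (f a)) (q a),
    fun a b (hab : e (near (f a)) (q a) = e (near (f b)) (q b)) => ?_, fun a => ?_⟩
  · have eq_near : near (f a) = near (f b) := hsep.eq (hnear _) (hnear _) <| not_lt.2 <| by
      rw [edist_le_coe, ← NNReal.coe_le_coe, coe_nndist]
      have hab_dist := dist_triangle_left (near (f a)) (near (f b)) (e (near (f a)) (q a))
      push_cast
      linarith [he_dist (near (f a)) (q a), he_dist (near (f b)) (q b),
        congr(dist $hab (near (f b)))]
    rw [eq_near] at hab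
    exact he _ hab
  · linarith [dist_triangle_right (e (near (f a)) (q a)) (f a) (near (f a)),
      he_dist (near (f a)) (q a), near_dist (f a)]

end Perturbation

section Embedding

variable {X : Type*} [MeasurableSpace X]

lemma mixture_pair_real_apply (x : Set.Icc (0 : ℝ) 1) (μ ν : ProbabilityMeasure X) (E : Set X) :
    (mixture ((stdSimplexEquivIcc ℝ).symm x) ![μ, ν] : Measure X).real E =
      (1 - x) * (μ : Measure X).real E + x * (ν : Measure X).real E := by
  rw [mixture_real_apply, Fin.sum_univ_two]
  rfl

lemma probabilityMeasure_ext {μ ν : ProbabilityMeasure X}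
    (h : ∀ E, MeasurableSet E → (μ : Measure X).real E = (ν : Measure X).real E) : μ = ν :=
  ProbabilityMeasure.eq_of_forall_toMeasure_apply_eq _ _ fun E hE =>
    (measureReal_eq_measureReal_iff).1 (h E hE)

lemma mixture_left_injective {μ ν : ProbabilityMeasure X} (h : μ ≠ ν) :
    Function.Injective fun x : Set.Icc (0 : ℝ) 1 =>
      mixture ((stdSimplexEquivIcc ℝ).symm x) ![μ, ν] := by
  intro x y hxy
  contrapose! h
  refine probabilityMeasure_ext fun E _ => ?_
  have hE := congr((($hxy : ProbabilityMeasure X) : Measure X).real E)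
  rw [mixture_pair_real_apply, mixture_pair_real_apply] at hE
  have hxy' : (x : ℝ) - y ≠ 0 := sub_ne_zero.2 (Subtype.coe_ne_coe.2 h)
  exact mul_left_cancel₀ hxy' (by linarith)

lemma mixture_right_injective (μ : ProbabilityMeasure X) {x : Set.Icc (0 : ℝ) 1} (hx : x ≠ 0) :
    Function.Injective fun ν : ProbabilityMeasure X =>
      mixture ((stdSimplexEquivIcc ℝ).symm x) ![μ, ν] := by
  intro ν ν' h
  refine probabilityMeasure_ext fun E _ => ?_
  have hE := congr((($h : ProbabilityMeasure X) : Measure X).real E)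
  rw [mixture_pair_real_apply, mixture_pair_real_apply, add_right_inj] at hE
  exact mul_left_cancel₀ (mt Set.Icc.coe_eq_zero.1 hx) hE

lemma tvDist_mixture_pair_le (x : Set.Icc (0 : ℝ) 1) (μ ν : ProbabilityMeasure X) :
    tvDist (mixture ((stdSimplexEquivIcc ℝ).symm x) ![μ, ν] : Measure X) μ ≤ x := by
  refine tvDist_le fun E _ => ?_
  rw [mixture_pair_real_apply, abs_sub_le_iff]
  constructor <;>
    nlinarith [x.2.1, measureReal_nonneg (μ := (μ : Measure X)) (s := E),
      measureReal_nonneg (μ := (ν : Measure X)) (s := E),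
      measureReal_le_one (μ := (μ : Measure X)) (s := E),
      measureReal_le_one (μ := (ν : Measure X)) (s := E)]

lemma infinite_probabilityMeasure [Nontrivial (ProbabilityMeasure X)] :
    Infinite (ProbabilityMeasure X) :=
  have ⟨_, _, h⟩ := exists_pair_ne (ProbabilityMeasure X)
  have : Infinite (Set.Icc (0 : ℝ) 1) := Set.infinite_coe_iff.2 (Set.Icc_infinite zero_lt_one)
  .of_injective _ (mixture_left_injective h)

lemma nonempty_pi_fin_embedding (n : ℕ) (P : Type*) [Infinite P] :
    Nonempty ((Fin n → P) ↪ P) := by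
  obtain ⟨e⟩ := Cardinal.eq.1 (Cardinal.mk_list_eq_mk P)
  exact ⟨.trans ⟨List.ofFn, List.ofFn_injective⟩ e.toEmbedding⟩

lemma nonempty_pi_fin_probabilityMeasure_embedding (n : ℕ) [Nonempty (ProbabilityMeasure X)] :
    Nonempty ((Fin n → ProbabilityMeasure X) ↪ ProbabilityMeasure X) := by
  cases subsingleton_or_nontrivial (ProbabilityMeasure X)
  · exact ⟨fun _ => Classical.arbitrary _, fun f g _ => Subsingleton.elim f g⟩
  · have := infinite_probabilityMeasure (X := X)
    exact nonempty_pi_fin_embedding n _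

lemma exists_factorsThrough_tvDist_le {K : Type*} {δ : ℝ} (hδ : δ ∈ Set.Ioc (0 : ℝ) 1) {n : ℕ}
    (f : K → ProbabilityMeasure X) (q : K → Fin n → ProbabilityMeasure X) :
    ∃ ψ : K → ProbabilityMeasure X, q.FactorsThrough ψ ∧
      ∀ a, tvDist (ψ a : Measure X) (f a) ≤ 3 * δ := by
  cases isEmpty_or_nonempty K
  · exact ⟨f, fun a => isEmptyElim a, fun a => isEmptyElim a⟩
  have := Nonempty.map f ‹_›
  obtain ⟨Φ⟩ := nonempty_pi_fin_probabilityMeasure_embedding (X := X) n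
  let := tvPseudoMetricSpace X
  have hδ' : (⟨δ, hδ.1.le, hδ.2⟩ : Set.Icc (0 : ℝ) 1) ≠ 0 :=
    fun h => hδ.1.ne' (Set.Icc.coe_eq_zero.2 h)
  exact exists_factorsThrough_dist_le (δ := ⟨δ, hδ.1.le⟩)
    (fun μ => (mixture_right_injective μ hδ').comp Φ.injective)
    (fun μ ν => tvDist_mixture_pair_le _ μ (Φ ν)) f q

end Embedding

section Decoder

variable {X : Type*} [MeasurableSpace X] {m n : ℕ} {A : (Fin m → X) → Set (Measure X)}

/-- All measures which the decoder `A` lists on some subsequence of length `m` of the sample. -/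
def subsampleOutputs (A : (Fin m → X) → Set (Measure X)) (n : ℕ) (S : Fin n → X) :
    Set (ProbabilityMeasure X) :=
  {μ | ∃ T : Fin m ↪o Fin n, (μ : Measure X) ∈ A (S ∘ T)}

lemma subsampleOutputs_eq_iUnion (S : Fin n → X) :
    subsampleOutputs A n S = ⋃ T : Fin m ↪o Fin n, (↑) ⁻¹' A (S ∘ T) := by
  ext μ
  simp [subsampleOutputs]

lemma finite_subsampleOutputs (hA : ∀ S, (A S).Finite) (S : Fin n → X) :
    (subsampleOutputs A n S).Finite := by
  rw [subsampleOutputs_eq_iUnion]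
  exact Set.finite_iUnion fun T => (hA _).preimage Subtype.coe_injective.injOn

lemma ncard_subsampleOutputs_le {L : ℝ} (hA : ∀ S, (A S).Finite) (hL : ∀ S, (A S).ncard ≤ L)
    (S : Fin n → X) : (subsampleOutputs A n S).ncard ≤ n.choose m * L := by
  rw [subsampleOutputs_eq_iUnion]
  have ncard_le (T : Fin m ↪o Fin n) :
      (((↑) ⁻¹' A (S ∘ T) : Set (ProbabilityMeasure X)).ncard : ℝ) ≤ L :=
    (Nat.cast_le.2 (Set.ncard_le_ncard_of_injOn Subtype.val (fun _ h => h)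
      Subtype.val_injective.injOn (hA _))).trans (hL _)
  calc ((⋃ T : Fin m ↪o Fin n, (↑) ⁻¹' A (S ∘ T) : Set (ProbabilityMeasure X)).ncard : ℝ)
      ≤ ∑ T : Fin m ↪o Fin n, (((↑) ⁻¹' A (S ∘ T) : Set (ProbabilityMeasure X)).ncard : ℝ) :=
        mod_cast Set.ncard_iUnion_le_of_fintype _
    _ ≤ ∑ _T : Fin m ↪o Fin n, L := Finset.sum_le_sum fun T _ => ncard_le T
    _ = n.choose m * L := by
        rw [Finset.sum_const, nsmul_eq_mul, Finset.card_univ, ← Nat.card_eq_fintype_card,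
          card_orderEmb_fin]

variable {ι : Type*} [Fintype ι]
  {ψ : stdSimplex ℝ ι × (ι → ProbabilityMeasure X) → ProbabilityMeasure X}
  {W : Set (stdSimplex ℝ ι)}

/-- The measures `ψ (v, q)` with weights `v ∈ W` and with components `q i` listed by `A` on some
subsequence of the sample. Here `ψ (v, q)` stands for an approximation of `mixture v q`. -/
def mixtureDecoder (ψ : stdSimplex ℝ ι × (ι → ProbabilityMeasure X) → ProbabilityMeasure X)
    (W : Set (stdSimplex ℝ ι)) (A : (Fin m → X) → Set (Measure X)) (n : ℕ) (S : Fin n → X) :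
    Set (Measure X) :=
  (fun c => (ψ c : Measure X)) '' (W ×ˢ {q | ∀ i, q i ∈ subsampleOutputs A n S})

lemma finite_mixtureDecoder (hW : W.Finite) (hA : ∀ S, (A S).Finite) (S : Fin n → X) :
    (mixtureDecoder ψ W A n S).Finite :=
  (hW.prod (.pi' fun _ => finite_subsampleOutputs hA S)).image _

lemma ncard_setOf_forall_mem {Y : Type*} (s : Set Y) :
    {q : ι → Y | ∀ i, q i ∈ s}.ncard = s.ncard ^ Fintype.card ι := by
  rw [← Nat.card_coe_set_eq, ← Nat.card_coe_set_eq, ← Nat.card_eq_fintype_card, ← Nat.card_fun]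
  exact Nat.card_congr (Equiv.subtypePiEquivPi (p := fun (_ : ι) y => y ∈ s))

lemma ncard_mixtureDecoder_le {L : ℝ} (hW : W.Finite) (hA : ∀ S, (A S).Finite)
    (hL : ∀ S, (A S).ncard ≤ L) (S : Fin n → X) :
    (mixtureDecoder ψ W A n S).ncard ≤ W.ncard * (n.choose m * L) ^ Fintype.card ι := by
  calc ((mixtureDecoder ψ W A n S).ncard : ℝ)
      ≤ (W ×ˢ {q : ι → ProbabilityMeasure X | ∀ i, q i ∈ subsampleOutputs A n S}).ncard :=
        Nat.cast_le.2 (Set.ncard_image_le (hW.prod (.pi' fun _ => finite_subsampleOutputs hA S)))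
    _ = W.ncard * ((subsampleOutputs A n S).ncard : ℝ) ^ Fintype.card ι := by
        rw [Set.ncard_prod, ncard_setOf_forall_mem, Nat.cast_mul, Nat.cast_pow]
    _ ≤ W.ncard * (n.choose m * L) ^ Fintype.card ι := by
        gcongr
        exact ncard_subsampleOutputs_le hA hL S

lemma setOf_mem_mixtureDecoder (hψ : Function.FactorsThrough Prod.snd ψ)
    {c : stdSimplex ℝ ι × (ι → ProbabilityMeasure X)} (hc : c.1 ∈ W) :
    {S | (ψ c : Measure X) ∈ mixtureDecoder ψ W A n S} =
      ⋂ i, subsampleHit n {S | (c.2 i : Measure X) ∈ A S} := by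
  ext S
  rw [Set.mem_iInter]
  refine ⟨?_, fun h => ⟨c, ⟨hc, h⟩, rfl⟩⟩
  rintro ⟨c', ⟨-, hc'⟩, hcc'⟩ i
  have hi := hc' i
  rwa [hψ (Subtype.ext hcc')] at hi

lemma ofReal_one_sub_card_mul_le_measure_iInter {Ω : Type*} [MeasurableSpace Ω] {P : Measure Ω}
    [IsProbabilityMeasure P] {b : ℝ} (hb : 0 ≤ b) {H : ι → Set Ω} (hH : ∀ i, MeasurableSet (H i))
    (hP : ∀ i, ENNReal.ofReal (1 - b) ≤ P (H i)) :
    ENNReal.ofReal (1 - Fintype.card ι * b) ≤ P (⋂ i, H i) := by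
  have compl_le (i : ι) : P (H i)ᶜ ≤ ENNReal.ofReal b := by
    rw [prob_compl_eq_one_sub (hH i), tsub_le_iff_right, ← tsub_le_iff_left, ← ENNReal.ofReal_one,
      ← ENNReal.ofReal_sub _ hb]
    exact hP i
  rw [ENNReal.ofReal_sub _ (by positivity), ENNReal.ofReal_one, tsub_le_iff_left,
    ← tsub_le_iff_right, ← prob_compl_eq_one_sub (.iInter hH), Set.compl_iInter]
  calc P (⋃ i, (H i)ᶜ) ≤ ∑ i, P (H i)ᶜ := measure_iUnion_fintype_le _ _
    _ ≤ ∑ _i : ι, ENNReal.ofReal b := Finset.sum_le_sum fun i _ => compl_le i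
    _ = ENNReal.ofReal (Fintype.card ι * b) := by
        rw [Finset.sum_const, Finset.card_univ, nsmul_eq_mul, ENNReal.ofReal_mul (by positivity),
          ENNReal.ofReal_natCast]

end Decoder

section Accuracy

variable {X : Type*} [MeasurableSpace X] {F : Set (Measure X)} {C α β L : ℝ} {m n k : ℕ}
  {A : (Fin m → X) → Set (Measure X)}

lemma exists_subsampleHit_of_mixture {ι : Type*} [Fintype ι] (hα : 0 ≤ α) (hC : 0 ≤ C)
    (hβ : 0 < β) (hA : IsStableListDecoder F C α m (1 - β) L A) {τ : ℝ} (hτ₀ : 0 ≤ τ)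
    (hτ : Fintype.card ι * τ ≤ 1) (hn : 2 * (m + Real.log (1 / β)) ≤ n * τ)
    (w : stdSimplex ℝ ι) (G : ι → ProbabilityMeasure X) :
    ∃ q : ι → ProbabilityMeasure X,
      (∀ i, MeasurableSet (subsampleHit n {S | (q i : Measure X) ∈ A S})) ∧
      (∀ i, ENNReal.ofReal (1 - 2 * β) ≤ Measure.pi (fun _ => (mixture w G : Measure X))
        (subsampleHit n {S | (q i : Measure X) ∈ A S})) ∧
      tvDist (mixture w q : Measure X) (mixture w G) ≤
        α + C * ∑ i, w i * tvDistSet (G i : Measure X) F + Fintype.card ι * τ := by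
  have exists_output (i : ι) : ∃ r : ProbabilityMeasure X,
      MeasurableSet {S | (r : Measure X) ∈ A S} ∧
      ENNReal.ofReal (1 - β) ≤
        Measure.pi (fun _ => (G i : Measure X)) {S | (r : Measure X) ∈ A S} ∧
      tvDist (r : Measure X) (G i) ≤ α + C * tvDistSet (G i : Measure X) F :=
    have ⟨r, hr, hrG⟩ := hA.2 (G i) inferInstance
    ⟨⟨r, hr⟩, hrG⟩
  choose r hr_meas hr_hit hr_dist using exists_output
  obtain ⟨σ, hσ, hσ_eq⟩ := exists_le_comp_and_eq_of_le w hτ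
  have ofReal_smul_le (i : ι) : ENNReal.ofReal τ • (G (σ i) : Measure X) ≤ mixture w G :=
    le_trans (by gcongr; exact hσ i) (ofReal_smul_le_mixture w G (σ i))
  have weighted_dist_le (i : ι) : w i * tvDist (r (σ i) : Measure X) (G i) ≤
      w i * α + C * (w i * tvDistSet (G i : Measure X) F) + τ := by
    have hwi := stdSimplex.zero_le w i
    obtain hi | hi := le_or_gt τ (w i)
    · rw [hσ_eq i hi]
      linarith [mul_le_mul_of_nonneg_left (hr_dist i) hwi]
    · have light := mul_le_of_le_one_right hwi
        (tvDist_le_one (μ := (r (σ i) : Measure X)) (ν := G i))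
      have := tvDistSet_nonneg (μ := (G i : Measure X)) (F := F)
      have : 0 ≤ w i * α + C * (w i * tvDistSet (G i : Measure X) F) := by positivity
      linarith
  refine ⟨fun i => r (σ i), fun i => measurableSet_subsampleHit (hr_meas _),
    fun i => ofReal_le_measure_pi_subsampleHit hτ₀ (ofReal_smul_le i) hβ hn (hr_meas _)
      (hr_hit _), ?_⟩
  calc _ ≤ ∑ i, w i * tvDist (r (σ i) : Measure X) (G i) := tvDist_mixture_components_le _ _ _
    _ ≤ ∑ i, (w i * α + C * (w i * tvDistSet (G i : Measure X) F) + τ) :=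
        Finset.sum_le_sum fun i _ => weighted_dist_le i
    _ = α + C * ∑ i, w i * tvDistSet (G i : Measure X) F + Fintype.card ι * τ := by
        rw [Finset.sum_add_distrib, Finset.sum_add_distrib, ← Finset.sum_mul, ← Finset.mul_sum,
          stdSimplex.sum_eq_one, one_mul, Finset.sum_const, Finset.card_univ, nsmul_eq_mul]

lemma exists_mem_mixtureDecoder (hF : ∀ f ∈ F, IsProbabilityMeasure f)
    (hα : α ∈ Set.Ioc (0 : ℝ) 1) (hβ : 0 < β) (hC : 0 ≤ C) (hk : 0 < k)
    (hA : IsStableListDecoder F C α m (1 - β) L A)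
    (hn : 2 * k * (m + Real.log (1 / β)) / α ≤ n)
    {ψ : stdSimplex ℝ (Fin k) × (Fin k → ProbabilityMeasure X) → ProbabilityMeasure X}
    (hψ : Function.FactorsThrough Prod.snd ψ)
    (hψ_dist : ∀ c, tvDist (ψ c : Measure X) (mixture c.1 c.2) ≤ α / 2)
    {W : Set (stdSimplex ℝ (Fin k))}
    (hW : ∀ w : stdSimplex ℝ (Fin k), ∃ v ∈ W, ∀ i, |v i - w i| ≤ 2 * α / k)
    (g : ProbabilityMeasure X) :
    ∃ r : ProbabilityMeasure X,
      MeasurableSet {S | (r : Measure X) ∈ mixtureDecoder ψ W A n S} ∧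
      ENNReal.ofReal (1 - 2 * k * β) ≤ Measure.pi (fun _ => (g : Measure X))
        {S | (r : Measure X) ∈ mixtureDecoder ψ W A n S} ∧
      tvDist (r : Measure X) g ≤ 5 * α + C * tvDistSet (g : Measure X) (kmix k F) := by
  have hk₀ : (0 : ℝ) < k := Nat.cast_pos.2 hk
  obtain ⟨hα₀, hα₁⟩ := hα
  have slack_le : C * (α / (2 * (C + 1))) ≤ α / 2 := by
    rw [mul_div_assoc', div_le_div_iff₀ (by positivity) two_pos]
    nlinarith
  obtain ⟨w, G, rfl, hG⟩ := exists_eq_mixture_sum_tvDistSet_le hF hk g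
    (ε := α / (2 * (C + 1))) (by positivity)
  obtain ⟨q, hq_meas, hq_hit, hq_dist⟩ := exists_subsampleHit_of_mixture hα₀.le hC hβ hA
    (τ := α / k) (n := n) (by positivity) (by rwa [Fintype.card_fin, mul_div_cancel₀ _ hk₀.ne'])
    (by rw [div_le_iff₀ hα₀] at hn; rw [← mul_div_assoc, le_div_iff₀ hk₀]; linarith) w G
  obtain ⟨v, hv, hvw⟩ := hW w
  have mem_eq := setOf_mem_mixtureDecoder (A := A) (n := n) hψ (c := (v, q)) hv
  refine ⟨ψ (v, q), ?_, ?_, ?_⟩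
  · rw [mem_eq]
    exact .iInter hq_meas
  · rw [mem_eq]
    convert ofReal_one_sub_card_mul_le_measure_iInter (by positivity) hq_meas hq_hit using 2
    rw [Fintype.card_fin]; ring
  · have weights_dist := tvDist_mixture_weights_le_of_abs_sub_le hvw q
    have decomposition_le := mul_le_mul_of_nonneg_left hG hC
    rw [Fintype.card_fin, mul_div_cancel₀ _ hk₀.ne'] at hq_dist weights_dist
    linarith [hψ_dist (v, q), tvDist_triangle (ψ (v, q) : Measure X) (mixture v q) (mixture w G),
      tvDist_triangle (mixture v q : Measure X) (mixture w q) (mixture w G)]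

theorem exists_isStableListDecoder_kmix (hF : ∀ f ∈ F, IsProbabilityMeasure f)
    (hα : α ∈ Set.Ioc (0 : ℝ) 1) (hβ : 0 < β) (hC : 0 ≤ C) (hk : 0 < k)
    (hA : IsStableListDecoder F C α m (1 - β) L A)
    (hn : 2 * k * (m + Real.log (1 / β)) / α ≤ n) :
    ∃ A₁ : (Fin n → X) → Set (Measure X), IsStableListDecoder (kmix k F) C (5 * α) n
      (1 - 2 * k * β) ((k / α * (n.choose m * L)) ^ k) A₁ := by
  have hα₀ : 0 < α := hα.1
  have hk₀ : (0 : ℝ) < k := Nat.cast_pos.2 hk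
  have half_lt_floor : k / α / 2 < ⌊k / α⌋₊ := Nat.div_two_lt_floor <|
    (one_le_div₀ hα₀).2 (hα.2.trans (Nat.one_le_cast.2 hk))
  have floor_pos : (0 : ℝ) < ⌊k / α⌋₊ := half_lt_floor.trans' (by positivity)
  obtain ⟨W, hW_fin, hW_card, hW⟩ := exists_ncard_le_pow_forall_abs_sub_le (ι := Fin k)
    (Nat.cast_pos.1 floor_pos)
  obtain ⟨ψ, hψ, hψ_dist⟩ := exists_factorsThrough_tvDist_le (δ := α / 6)
    ⟨by positivity, by linarith [hα.2]⟩ (fun c => mixture c.1 c.2) (q := (Prod.snd :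
      stdSimplex ℝ (Fin k) × (Fin k → ProbabilityMeasure X) → Fin k → ProbabilityMeasure X))
  have hA_fin (S) := (hA.1 S).1
  have hA_card (S) := (hA.1 S).2.1
  refine ⟨mixtureDecoder ψ W A n, fun S => ⟨finite_mixtureDecoder hW_fin hA_fin S, ?_,
    Set.forall_mem_image.2 fun c _ => inferInstance⟩, fun g hg => ?_⟩
  · have hL : 0 ≤ n.choose m * L :=
      (Nat.cast_nonneg _).trans (ncard_subsampleOutputs_le hA_fin hA_card S)
    calc ((mixtureDecoder ψ W A n S).ncard : ℝ) ≤ W.ncard * (n.choose m * L) ^ k := by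
          simpa using ncard_mixtureDecoder_le hW_fin hA_fin hA_card S
      _ ≤ ⌊k / α⌋₊ ^ k * (n.choose m * L) ^ k := by
          gcongr
          simpa using (Nat.cast_le (α := ℝ)).2 hW_card
      _ ≤ (k / α * (n.choose m * L)) ^ k := by
          rw [← mul_pow]
          gcongr
          exact Nat.floor_le (by positivity)
  · have cell_width_le : 1 / (⌊k / α⌋₊ : ℝ) ≤ 2 * α / k := by
      rw [div_div, div_lt_iff₀ (by positivity)] at half_lt_floor
      rw [div_le_div_iff₀ floor_pos hk₀]
      linarith
    obtain ⟨r, hr⟩ := exists_mem_mixtureDecoder hF hα hβ hC hk hA hn hψ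
      (fun c => (hψ_dist c).trans_eq (by ring))
      (fun w => (hW w).imp fun v hv => hv.imp_right fun h i => (h i).trans cell_width_le) ⟨g, hg⟩
    exact ⟨r, inferInstance, hr⟩

end Accuracy

section ListSize

lemma IsStableListDecoder.mono {X : Type*} [MeasurableSpace X] {F : Set (Measure X)}
    {C α ρ L L' : ℝ} {m : ℕ} {A : (Fin m → X) → Set (Measure X)} (hLL' : L ≤ L')
    (hA : IsStableListDecoder F C α m ρ L A) : IsStableListDecoder F C α m ρ L' A :=
  ⟨fun S => ⟨(hA.1 S).1, (hA.1 S).2.1.trans hLL', (hA.1 S).2.2⟩, hA.2⟩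

lemma choose_natCeil_le {m k : ℕ} {α l : ℝ} (hk : 0 < k) (hα : α ∈ Set.Ioc (0 : ℝ) 1)
    (hl : 1 ≤ l) :
    (⌈(2 * (m : ℝ) * k + 8 * k * l) / α⌉₊.choose m : ℝ) ≤
      (10 * Real.exp 1 * k * l / α) ^ m := by
  obtain ⟨hα₀, hα₁⟩ := hα
  have hk₁ : (1 : ℝ) ≤ k := Nat.one_le_cast.2 hk
  have one_le : 1 ≤ k * l / α := (one_le_div₀ hα₀).2 (by nlinarith)
  rw [mul_assoc (10 * Real.exp 1), mul_div_assoc (10 * Real.exp 1)]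
  refine choose_le_ten_mul_exp_one_mul_pow one_le ?_
  calc (⌈(2 * (m : ℝ) * k + 8 * k * l) / α⌉₊ : ℝ) ≤ (2 * m * k + 8 * k * l) / α + 1 :=
        (Nat.ceil_lt_add_one (by positivity)).le
    _ ≤ (2 * m * (k * l) + 8 * k * l) / α + k * l / α := by
        gcongr ?_ / _ + ?_
        nlinarith [mul_le_mul_of_nonneg_left hl (by positivity : (0 : ℝ) ≤ m * k)]
    _ = (2 * m + 9) * (k * l / α) := by ring

end ListSize

theorem statement1_general {X : Type*} [MeasurableSpace X] {F : Set (Measure X)}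
    (hF : ∀ f ∈ F, IsProbabilityMeasure f) {α β C : ℝ} (hα : α ∈ Set.Ioc (0 : ℝ) 1)
    (hβ : β ∈ Set.Ioc (0 : ℝ) (Real.exp 1)⁻¹) (hC : 0 ≤ C) {L m k : ℕ} (hk : 0 < k)
    {A : (Fin m → X) → Set (Measure X)} (hA : IsStableListDecoder F C α m (1 - β) L A) :
    ∃ A₁ : (Fin ⌈(2 * (m : ℝ) * k + 8 * k * Real.log (1 / β)) / α⌉₊ → X) → Set (Measure X),
      IsStableListDecoder (kmix k F) C (5 * α) _ (1 - 2 * k * β)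
        ((L * k / α) ^ k * (10 * Real.exp 1 * k * Real.log (1 / β) / α) ^ (m * k)) A₁ := by
  obtain ⟨hβ₀, hβ₁⟩ := hβ
  have hα₀ := hα.1
  have one_le_log : 1 ≤ Real.log (1 / β) := by
    rw [Real.le_log_iff_exp_le (by positivity), one_div, le_inv_comm₀ (Real.exp_pos 1) hβ₀]
    exact hβ₁
  have sample_size_le : 2 * k * (m + Real.log (1 / β)) / α ≤
      ⌈(2 * (m : ℝ) * k + 8 * k * Real.log (1 / β)) / α⌉₊ := by
    refine le_trans ?_ (Nat.le_ceil _)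
    gcongr
    nlinarith [mul_nonneg (k.cast_nonneg : (0 : ℝ) ≤ k) (zero_le_one.trans one_le_log)]
  obtain ⟨A₁, hA₁⟩ := exists_isStableListDecoder_kmix hF hα hβ₀ hC hk hA sample_size_le
  refine ⟨A₁, hA₁.mono ?_⟩
  calc _ ≤ (k / α * ((10 * Real.exp 1 * k * Real.log (1 / β) / α) ^ m * L)) ^ k := by
        gcongr
        exact choose_natCeil_le hk hα one_le_log
    _ = _ := by
        rw [pow_mul, ← mul_pow]; ring

theorem statement1 {X : Type*} [MeasurableSpace X] (F : Set (Measure X))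
    (hF : ∀ f ∈ F, IsProbabilityMeasure f)
    (α β C : ℝ) (hα : α ∈ Set.Ioo (0 : ℝ) 1) (hβ : β ∈ Set.Ioc (0 : ℝ) (Real.exp 1)⁻¹)
    (hC : 1 < C) (L m k : ℕ) (hL : 0 < L) (hm : 0 < m) (hk : 0 < k)
    (A : (Fin m → X) → Set (Measure X))
    (hA : IsStableListDecoder F C α m (1 - β) L A)
    (m₁ : ℕ) (hm₁ : m₁ = ⌈(2 * (m : ℝ) * k + 8 * k * Real.log (1 / β)) / α⌉₊)
    (L₁ : ℝ)
    (hL₁ : L₁ = ((L : ℝ) * k / α) ^ k *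
      (10 * Real.exp 1 * k * Real.log (1 / β) / α) ^ (m * k)) :
    ∃ A₁ : (Fin m₁ → X) → Set (Measure X),
      IsStableListDecoder (kmix k F) C (5 * α) m₁ (1 - 2 * k * β) L₁ A₁ := by
  subst hm₁ hL₁
  exact statement1_general hF ⟨hα.1, hα.2.le⟩ hβ (zero_le_one.trans hC.le) hk hA
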